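/- A c-atom A is antimonotone if and only if every element W⊎V of its abstract representation A_c* has W = ∅; in this case A_c* = {∅⊎T : T is maximal in A_c}. -/

import Mathlib

variable {α : Type*} [DecidableEq α]

/-- `S` is covered by the prefixed power set `W ⊎ V`. -/
def covers (W V S : Finset α) : Prop := W ⊆ S ∧ S ⊆ W ∪ V

/-- `I ⊎ J` is included in `W ⊎ V`. -/
def included (I J W V : Finset α) : Prop := ∀ S : Finset α, covers I J S → covers W V S

/-- `W ⊎ V` is a prefixed power set of the c-atom `(Ad, Ac)` all of whose
covered sets are admissible solutions. -/
def goodPPS (Ad : Finset α) (Ac : Set (Finset α)) (W V : Finset α) : Prop :=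
  W ∈ Ac ∧ V ⊆ Ad \ W ∧ ∀ T : Finset α, W ⊆ T → T ⊆ W ∪ V → T ∈ Ac

/-- `W ⊎ V` is `W`-maximal in the c-atom `(Ad, Ac)`. -/
def maximalPPS (Ad : Finset α) (Ac : Set (Finset α)) (W V : Finset α) : Prop :=
  goodPPS Ad Ac W V ∧ ∀ V' : Finset α, V ⊂ V' → V' ⊆ Ad \ W → ¬ goodPPS Ad Ac W V'

/-- The abstract representation `A_c*` of the c-atom `(Ad, Ac)`: all maximal
prefixed power sets, with redundant ones (those included in a distinct maximal
prefixed power set) removed. -/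
def absRep (Ad : Finset α) (Ac : Set (Finset α)) : Set (Finset α × Finset α) :=
  {p | maximalPPS Ad Ac p.1 p.2 ∧
    ∀ q : Finset α × Finset α, maximalPPS Ad Ac q.1 q.2 → q ≠ p →
      ¬ included p.1 p.2 q.1 q.2}

/-- The c-atom `(Ad, Ac)` is antimonotone: `Ac` is closed under subsets. -/
def antimonotoneCatom (Ac : Set (Finset α)) : Prop :=
  ∀ S ∈ Ac, ∀ S' : Finset α, S' ⊆ S → S' ∈ Ac

/-!
Attach to `W ⊎ V` with `V` disjoint from `W` the interval of sets between `W` and `W ∪ V`. Then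
`A_c*` consists of the inclusion-maximal intervals contained in `A_c`, and each interval in `A_c`
extends to a maximal one: a proper extension enlarges `V`, so it suffices to take, among the
intervals extending the given one, one with `V` maximal. If `A_c` is closed under subsets, an
interval up to `T` extends to the one from `∅` to `T`, so the maximal intervals start at `∅` and end
at the maximal elements of `A_c`. Conversely, every `S ∈ A_c` lies in a maximal interval, which
contains all subsets of `S` if it starts at `∅`.
-/

variable {I J W V S T Ad : Finset α} {Ac : Set (Finset α)} {p q : Finset α × Finset α}

theorem included_iff : included I J W V ↔ W ⊆ I ∧ I ∪ J ⊆ W ∪ V :=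
  Set.Icc_subset_Icc_iff Finset.subset_union_left

theorem included.trans {I' J' : Finset α} (h : included I J W V) (h' : included W V I' J') :
    included I J I' J' :=
  fun S hS ↦ h' S (h S hS)

theorem included.snd_subset (h : included I J W V) (hIJ : Disjoint I J) : J ⊆ V := by
  obtain ⟨hWI, hsub⟩ := included_iff.mp h
  exact Disjoint.left_le_of_le_sup_left (Finset.subset_union_right.trans hsub)
    (hIJ.symm.mono_right hWI)

theorem included.eq_of_snd_subset (h : included p.1 p.2 q.1 q.2) (hp : Disjoint p.1 p.2)
    (hsub : q.2 ⊆ p.2) : q = p := by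
  obtain ⟨hfst, hunion⟩ := included_iff.mp h
  have hfst' : p.1 ⊆ q.1 :=
    Disjoint.left_le_of_le_sup_right (Finset.subset_union_left.trans hunion)
      (hp.mono_right hsub)
  exact Prod.ext (hfst.antisymm hfst') (hsub.antisymm (h.snd_subset hp))

theorem included.antisymm (h : included p.1 p.2 q.1 q.2) (h' : included q.1 q.2 p.1 p.2)
    (hp : Disjoint p.1 p.2) (hq : Disjoint q.1 q.2) : p = q :=
  (h.eq_of_snd_subset hp (h'.snd_subset hq)).symm

theorem goodPPS.disjoint (h : goodPPS Ad Ac W V) : Disjoint W V :=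
  Finset.disjoint_sdiff.mono_right h.2.1

theorem goodPPS.mem_of_covers (h : goodPPS Ad Ac W V) (hS : covers W V S) : S ∈ Ac :=
  h.2.2 S hS.1 hS.2

theorem goodPPS.union_mem (h : goodPPS Ad Ac W V) : W ∪ V ∈ Ac :=
  h.mem_of_covers ⟨Finset.subset_union_left, subset_rfl⟩

theorem goodPPS_empty_right_iff : goodPPS Ad Ac S ∅ ↔ S ∈ Ac := by
  refine ⟨And.left, fun hS ↦ ⟨hS, Finset.empty_subset _, fun T hST hTS ↦ ?_⟩⟩
  rw [Finset.union_empty] at hTS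
  rwa [← hST.antisymm hTS]

theorem mem_absRep_of_forall_included (hp : goodPPS Ad Ac p.1 p.2)
    (hmax : ∀ q : Finset α × Finset α, goodPPS Ad Ac q.1 q.2 → included p.1 p.2 q.1 q.2 → q = p) :
    p ∈ absRep Ad Ac := by
  refine ⟨⟨hp, fun V' hV' _ hgood ↦ hV'.ne ?_⟩, fun q hq hne hinc ↦ hne (hmax q hq.1 hinc)⟩
  have hinc : included p.1 p.2 p.1 V' :=
    included_iff.mpr ⟨subset_rfl, Finset.union_subset_union_right hV'.subset⟩
  exact (congrArg Prod.snd (hmax (p.1, V') hgood hinc)).symm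

theorem goodPPS.exists_mem_absRep_included (h : goodPPS Ad Ac W V) :
    ∃ q ∈ absRep Ad Ac, included W V q.1 q.2 := by
  let extensions : Set (Finset α × Finset α) :=
    {q | goodPPS Ad Ac q.1 q.2 ∧ included W V q.1 q.2}
  have hfinite : (Prod.snd '' extensions).Finite := by
    refine Ad.powerset.finite_toSet.subset ?_
    rintro _ ⟨q, ⟨hq, -⟩, rfl⟩
    exact Finset.mem_coe.mpr (Finset.mem_powerset.mpr (hq.2.1.trans Finset.sdiff_subset))
  obtain ⟨q, ⟨hq, hinc⟩, hmax⟩ :=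
    hfinite.exists_maximalFor' Prod.snd extensions ⟨(W, V), h, fun _ hS ↦ hS⟩
  refine ⟨q, mem_absRep_of_forall_included hq fun r hr hqr ↦ ?_, hinc⟩
  exact hqr.eq_of_snd_subset hq.disjoint
    (hmax ⟨hr, hinc.trans hqr⟩ (hqr.snd_subset hq.disjoint))

theorem eq_of_mem_absRep_of_included (hp : p ∈ absRep Ad Ac) (hq : goodPPS Ad Ac q.1 q.2)
    (h : included p.1 p.2 q.1 q.2) : q = p := by
  obtain ⟨r, hr, hqr⟩ := hq.exists_mem_absRep_included
  obtain rfl : r = p := by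
    by_contra hne
    exact hp.2 r hr.1 hne (h.trans hqr)
  exact hqr.antisymm h hq.disjoint hp.1.1.disjoint

theorem mem_absRep_iff :
    p ∈ absRep Ad Ac ↔ goodPPS Ad Ac p.1 p.2 ∧
      ∀ q : Finset α × Finset α, goodPPS Ad Ac q.1 q.2 → included p.1 p.2 q.1 q.2 → q = p :=
  ⟨fun hp ↦ ⟨hp.1.1, fun _ ↦ eq_of_mem_absRep_of_included hp⟩,
    fun h ↦ mem_absRep_of_forall_included h.1 h.2⟩

theorem antimonotoneCatom_of_forall_fst_eq_empty (h : ∀ p ∈ absRep Ad Ac, p.1 = ∅) :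
    antimonotoneCatom Ac := by
  intro S hS S' hS'
  obtain ⟨q, hq, hinc⟩ := (goodPPS_empty_right_iff (Ad := Ad).mpr hS).exists_mem_absRep_included
  have hSq : S ⊆ q.1 ∪ q.2 := Finset.subset_union_left.trans (included_iff.mp hinc).2
  exact hq.1.1.mem_of_covers ⟨h q hq ▸ Finset.empty_subset S', hS'.trans hSq⟩

namespace antimonotoneCatom

theorem goodPPS_empty_left_iff (ha : antimonotoneCatom Ac) (hAc : ∀ S ∈ Ac, S ⊆ Ad) :
    goodPPS Ad Ac ∅ T ↔ T ∈ Ac := by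
  refine ⟨fun h ↦ Finset.empty_union T ▸ h.union_mem, fun hT ↦ ?_⟩
  refine ⟨ha T hT ∅ (Finset.empty_subset T), ?_, fun S _ hST ↦ ha T hT S ?_⟩
  · rw [Finset.sdiff_empty]
    exact hAc T hT
  · rwa [Finset.empty_union] at hST

theorem fst_eq_empty_of_mem_absRep (ha : antimonotoneCatom Ac) (hAc : ∀ S ∈ Ac, S ⊆ Ad)
    (hp : p ∈ absRep Ad Ac) : p.1 = ∅ := by
  have hgood : goodPPS Ad Ac ∅ (p.1 ∪ p.2) :=
    (ha.goodPPS_empty_left_iff hAc).mpr hp.1.1.union_mem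
  have hinc : included p.1 p.2 ∅ (p.1 ∪ p.2) :=
    included_iff.mpr ⟨Finset.empty_subset _, Finset.subset_union_right⟩
  exact (congrArg Prod.fst (eq_of_mem_absRep_of_included (q := (∅, p.1 ∪ p.2)) hp hgood hinc)).symm

theorem empty_mem_absRep_iff (ha : antimonotoneCatom Ac) (hAc : ∀ S ∈ Ac, S ⊆ Ad) :
    (∅, T) ∈ absRep Ad Ac ↔ T ∈ Ac ∧ ∀ S ∈ Ac, T ⊆ S → S = T := by
  have hgood {S : Finset α} : goodPPS Ad Ac ∅ S ↔ S ∈ Ac := ha.goodPPS_empty_left_iff hAc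
  have hinc {S : Finset α} : included ∅ T ∅ S ↔ T ⊆ S := by
    simp only [included_iff, Finset.empty_union, subset_rfl, true_and]
  rw [mem_absRep_iff, hgood]
  refine and_congr_right fun _ ↦ ⟨fun hmax S hS hTS ↦ ?_, ?_⟩
  · exact congrArg Prod.snd (hmax (∅, S) (hgood.mpr hS) (hinc.mpr hTS))
  · rintro hmax ⟨W, V⟩ hq hTq
    obtain rfl : W = ∅ := Finset.subset_empty.mp (included_iff.mp hTq).1
    exact Prod.ext rfl (hmax V (hgood.mp hq) (hinc.mp hTq))

end antimonotoneCatom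

theorem stmt_6 (Ad : Finset α) (Ac : Set (Finset α)) (hAc : ∀ S ∈ Ac, S ⊆ Ad) :
    (antimonotoneCatom Ac ↔ ∀ p ∈ absRep Ad Ac, p.1 = (∅ : Finset α)) ∧
    (antimonotoneCatom Ac →
      absRep Ad Ac =
        {p | p.1 = (∅ : Finset α) ∧ p.2 ∈ Ac ∧ ∀ T ∈ Ac, p.2 ⊆ T → T = p.2}) := by
  refine ⟨⟨fun ha p ↦ ha.fst_eq_empty_of_mem_absRep hAc,
    antimonotoneCatom_of_forall_fst_eq_empty⟩, fun ha ↦ ?_⟩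
  ext ⟨W, V⟩
  constructor
  · intro hp
    obtain rfl : W = ∅ := ha.fst_eq_empty_of_mem_absRep hAc hp
    exact ⟨rfl, (ha.empty_mem_absRep_iff hAc).mp hp⟩
  · rintro ⟨rfl : W = ∅, hV⟩
    exact (ha.empty_mem_absRep_iff hAc).mpr hV
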